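/- Suppose the NICF expansion of α has ε_i = +1 for all i (so it coincides with the regular continued fraction expansion of α, all of whose partial quotients satisfy a_i ≥ 2), and suppose R := liminf_{i→∞} a_i is finite. Then M(α,γ_**) ≥ (1/4)·(1 − 2/R_*)·(1 − 2θ_1² − θ_1³), and this quantity is ≥ (1/4)·(1 − 2/R_* − 2/R_*² + 3/R_*³). -/

import Mathlib

open Filter Finset

attribute [local instance] Classical.propDecidable

/-- Distance from `x` to the nearest integer, `‖x‖`. -/
noncomputable def nint (x : ℝ) : ℝ := |x - round x|

/-- The two-sided inhomogeneous approximation constant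
`M(α,γ) = liminf_{|n|→∞} |n|·‖nα-γ‖`. -/
noncomputable def Mval (α γ : ℝ) : ℝ :=
  Filter.liminf (fun n : ℤ => (|n| : ℝ) * nint (n * α - γ)) Filter.cofinite

/-- `ρ(α) = sup { M(α,γ) : γ ∉ ℤ + αℤ }`. -/
noncomputable def rho (α : ℝ) : ℝ :=
  sSup {m : ℝ | ∃ γ : ℝ, (¬∃ p q : ℤ, γ = (p : ℝ) + (q : ℝ) * α) ∧ m = Mval α γ}

/-- The tails `α_i` of the nearest integer continued fraction expansion of `α`. -/
noncomputable def nicfT (α : ℝ) : ℕ → ℝ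
  | 0 => α
  | i + 1 =>
    if Int.fract (nicfT α i)⁻¹ ≤ 1 / 2 then Int.fract (nicfT α i)⁻¹
    else 1 - Int.fract (nicfT α i)⁻¹

/-- The partial quotients `a_i` (meaningful for `i ≥ 1`) of the NICF expansion. -/
noncomputable def nicfA (α : ℝ) : ℕ → ℤ
  | 0 => 0
  | i + 1 => if Int.fract (nicfT α i)⁻¹ ≤ 1 / 2 then ⌊(nicfT α i)⁻¹⌋ else ⌈(nicfT α i)⁻¹⌉

/-- The signs `ε_i` of the NICF expansion (`ε_1 = 1`). -/
noncomputable def nicfE (α : ℝ) : ℕ → ℤ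
  | 0 => 1
  | 1 => 1
  | i + 2 => if Int.fract (nicfT α i)⁻¹ ≤ 1 / 2 then 1 else -1

/-- `nicfD α n = D_{n-1} = α_0 α_1 ⋯ α_{n-1}` (so `nicfD α 0 = 1`, `nicfD α 1 = α`). -/
noncomputable def nicfD (α : ℝ) (n : ℕ) : ℝ := ∏ j ∈ Finset.range n, nicfT α j

/-- The number of indices `1 ≤ k ≤ i` with `a_k` odd. -/
noncomputable def oddIdx (α : ℝ) (i : ℕ) : ℕ :=
  ((Finset.Icc 1 i).filter fun k => Odd (nicfA α k)).card

/-- `λ_i`: zero if `a_i` is even, `(-1)^j` if `a_i = a_{n_j}` is the `j`-th odd partial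
quotient. -/
noncomputable def lamStar (α : ℝ) (i : ℕ) : ℤ :=
  if Odd (nicfA α i) then (-1) ^ oddIdx α i else 0

/-- `γ_* = Σ_{i≥1} (a_i - 1 + ε_i + λ_i)/2 · D_{i-1}`. -/
noncomputable def gammaStar (α : ℝ) : ℝ :=
  ∑' k : ℕ,
    (((nicfA α (k + 1) : ℝ) - 1 + (nicfE α (k + 1) : ℝ) + (lamStar α (k + 1) : ℝ)) / 2) *
      nicfD α (k + 1)

/-- `λ'_i`: zero if `a_i` is even, one if `a_i` is odd. -/
noncomputable def lamStar2 (α : ℝ) (i : ℕ) : ℤ := if Odd (nicfA α i) then 1 else 0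

/-- `γ_** = Σ_{i≥1} (a_i + λ'_i)/2 · D_{i-1}`. -/
noncomputable def gammaStar2 (α : ℝ) : ℝ :=
  ∑' k : ℕ, (((nicfA α (k + 1) : ℝ) + (lamStar2 α (k + 1) : ℝ)) / 2) * nicfD α (k + 1)

/-- The denominators `q_i`: `q_0 = 1`, `q_1 = a_1`, `q_i = a_i q_{i-1} + ε_i q_{i-2}`. -/
noncomputable def qseq (α : ℝ) : ℕ → ℤ
  | 0 => 1
  | 1 => nicfA α 1
  | i + 2 => nicfA α (i + 2) * qseq α (i + 1) + nicfE α (i + 2) * qseq α i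

/-- `ᾱ_i = q_{i-1}/q_i` (with `ᾱ_0 = 0`). -/
noncomputable def abar (α : ℝ) (i : ℕ) : ℝ :=
  if i = 0 then 0 else (qseq α (i - 1) : ℝ) / (qseq α i : ℝ)

/-- `δ_i = -(-ε_1)(-ε_2)⋯(-ε_{i+1})`. -/
noncomputable def deltaSeq (α : ℝ) (i : ℕ) : ℤ := -∏ j ∈ Finset.Icc 1 (i + 1), (-nicfE α j)

/-- `d_n^- = (Σ_{i=1}^n t_i δ_{i-1} q_{i-1}) / (δ_{n-1} q_n)` for `γ_*` (so `t_i = λ_i`). -/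
noncomputable def dminus (α : ℝ) (n : ℕ) : ℝ :=
  (∑ i ∈ Finset.Icc 1 n, (lamStar α i : ℝ) * (deltaSeq α (i - 1) : ℝ) * (qseq α (i - 1) : ℝ)) /
    ((deltaSeq α (n - 1) : ℝ) * (qseq α n : ℝ))

/-- `d_n^+ = (Σ_{i=n+1}^∞ t_i D_{i-1}) / D_{n-1}` for `γ_*` (so `t_i = λ_i`). -/
noncomputable def dplus (α : ℝ) (n : ℕ) : ℝ :=
  (∑' k : ℕ, (lamStar α (n + 1 + k) : ℝ) * nicfD α (n + 1 + k)) / nicfD α n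

/-- `d_n^-` for `γ_**` (so `t_i = λ'_i`). -/
noncomputable def dminus2 (α : ℝ) (n : ℕ) : ℝ :=
  (∑ i ∈ Finset.Icc 1 n, (lamStar2 α i : ℝ) * (deltaSeq α (i - 1) : ℝ) * (qseq α (i - 1) : ℝ)) /
    ((deltaSeq α (n - 1) : ℝ) * (qseq α n : ℝ))

/-- `d_n^+` for `γ_**` (so `t_i = λ'_i`). -/
noncomputable def dplus2 (α : ℝ) (n : ℕ) : ℝ :=
  (∑' k : ℕ, (lamStar2 α (n + 1 + k) : ℝ) * nicfD α (n + 1 + k)) / nicfD α n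

/-- `i ∈ S(γ_*)`: `|d_i^-| ≤ 1 - ᾱ_i` and `-(1-ε_{i+1}α_i) ≤ d_i^+ ≤ 1+ε_{i+1}α_i`. -/
def inS (α : ℝ) (i : ℕ) : Prop :=
  |dminus α i| ≤ 1 - abar α i ∧
    -(1 - (nicfE α (i + 1) : ℝ) * nicfT α i) ≤ dplus α i ∧
      dplus α i ≤ 1 + (nicfE α (i + 1) : ℝ) * nicfT α i

/-- `i ∈ S(γ_**)`. -/
def inS2 (α : ℝ) (i : ℕ) : Prop :=
  |dminus2 α i| ≤ 1 - abar α i ∧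
    -(1 - (nicfE α (i + 1) : ℝ) * nicfT α i) ≤ dplus2 α i ∧
      dplus2 α i ≤ 1 + (nicfE α (i + 1) : ℝ) * nicfT α i

/-- The remainders `γ_i` of the alpha-expansion of `γ`: `γ_0 = γ`,
`γ_{i+1} = {γ_i/α_i}`. -/
noncomputable def gSeq (α γ : ℝ) : ℕ → ℝ
  | 0 => γ
  | i + 1 => Int.fract (gSeq α γ i / nicfT α i)

/-- The coefficients `c_i` (for `i ≥ 1`) of the alpha-expansion of `γ`:
`c_{i+1} = ⌊γ_i/α_i⌋`. -/
noncomputable def cCoef (α γ : ℝ) (i : ℕ) : ℤ := ⌊gSeq α γ (i - 1) / nicfT α (i - 1)⌋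

/-!
Since `2 γ_** = 1 + α + d_0^+`, up to a factor tending to `1`, the number `|n| ‖nα - γ_**‖` is a
quarter of `|u| |u α + v - d_0^+|` with `u = 2 n - 1` and `v` odd. Rewriting this in terms of the
`k`-th remainder gives odd integers `x_k` with
`±u = q_k (x_k - x_{k+1} ᾱ_k - d_k^-)` and `u α + v - d_0^+ = D_{k-1} (x_k α_k + x_{k+1} - d_k^+)`.

If `x_k` and `x_{k+1}` have the same sign and the form is at most `1`, then `u` is bounded; so for
large `|u|` the signs are opposite at any prescribed `k`. They cannot stay opposite forever, because
opposite signs force `|u| ≥ q_k / 2`. Hence, beyond any prescribed index, some `x_k` is followed by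
two terms of the other sign. There the product is bilinear in `x_k` and `x_{k+2}`, whose
absolute values have a sum of at least about `a_{k+1}`, and its minimum is attained at an extreme
point. What remains is an estimate of `d_{k+1}^+` in terms of `α_{k+1}`, which is sharp for the
expansion `[0; R_*, R_*, …]` of `θ_1`.
-/

/-! ### The constants `θ` and `κ` -/

/-- The positive root of `θ (ρ + θ) = 1`, i.e. the value of the continued fraction
`[0; ρ, ρ, …]`; at `ρ = R_*` this is the paper's `θ_1`. -/
noncomputable def theta (ρ : ℝ) : ℝ := (√(ρ ^ 2 + 4) - ρ) / 2

/-- The factor `κ = 1 - 2 θ² - θ³` of the lower bound. -/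
noncomputable def kappa (ρ : ℝ) : ℝ := 1 - 2 * theta ρ ^ 2 - theta ρ ^ 3

lemma theta_pos (ρ : ℝ) : 0 < theta ρ := by
  have : ρ < √(ρ ^ 2 + 4) := Real.lt_sqrt_of_sq_lt (by linarith)
  unfold theta
  linarith

lemma theta_mul_add_theta (ρ : ℝ) : theta ρ * (ρ + theta ρ) = 1 := by
  have : √(ρ ^ 2 + 4) ^ 2 = ρ ^ 2 + 4 := Real.sq_sqrt (by positivity)
  unfold theta
  linear_combination this / 4

lemma theta_le_inv {ρ : ℝ} (hρ : 0 < ρ) : theta ρ ≤ ρ⁻¹ := by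
  rw [← one_div, le_div_iff₀ hρ]
  nlinarith [theta_mul_add_theta ρ, sq_nonneg (theta ρ)]

lemma inv_le_one_third {ρ : ℝ} (hρ : 3 ≤ ρ) : ρ⁻¹ ≤ 1 / 3 := by
  rw [one_div]
  exact inv_anti₀ (by norm_num) hρ

lemma theta_le_one_third {ρ : ℝ} (hρ : 3 ≤ ρ) : theta ρ ≤ 1 / 3 :=
  (theta_le_inv (by linarith)).trans (inv_le_one_third hρ)

lemma kappa_le_one (ρ : ℝ) : kappa ρ ≤ 1 := by
  have := theta_pos ρ
  have : 0 ≤ 2 * theta ρ ^ 2 + theta ρ ^ 3 := by positivity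
  unfold kappa
  linarith

lemma one_sub_kappa_le_theta {ρ : ℝ} (hρ : 3 ≤ ρ) : 1 - kappa ρ ≤ theta ρ := by
  have h3 := theta_le_one_third hρ
  have hle : theta ρ * (2 + theta ρ) ≤ 1 := by nlinarith [theta_pos ρ]
  have := mul_le_mul_of_nonneg_left hle (theta_pos ρ).le
  unfold kappa
  linarith

lemma kappa_nonneg {ρ : ℝ} (hρ : 3 ≤ ρ) : 0 ≤ kappa ρ := by
  linarith [one_sub_kappa_le_theta hρ, theta_le_one_third hρ]

lemma inv_mul_one_add_theta_add_kappa {ρ : ℝ} (hρ : 0 < ρ) :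
    ρ⁻¹ * (1 + theta ρ + kappa ρ) = (1 - kappa ρ) * (ρ + theta ρ) := by
  have hθ := theta_mul_add_theta ρ
  rw [inv_mul_eq_iff_eq_mul₀ hρ.ne']
  unfold kappa
  linear_combination (-(2 + theta ρ) * (ρ * theta ρ + 1)) * hθ

lemma three_halves_mul_inv_sq_le_one_sub_kappa {ρ : ℝ} (hρ : 3 ≤ ρ) :
    3 / 2 * (ρ⁻¹) ^ 2 ≤ 1 - kappa ρ := by
  have hθ := theta_mul_add_theta ρ
  have hθ0 := theta_pos ρ
  have hθ3 := theta_le_one_third hρ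
  have hinv : ρ⁻¹ ≤ 9 / 8 * theta ρ := by
    rw [inv_le_iff_one_le_mul₀ (by linarith)]
    nlinarith
  have hsq : (ρ⁻¹) ^ 2 ≤ (9 / 8 * theta ρ) ^ 2 := by gcongr
  unfold kappa
  nlinarith

lemma one_sub_two_div_mul_kappa_ge {ρ : ℝ} (hρ : 2 ≤ ρ) :
    1 / 4 * (1 - 2 / ρ) * kappa ρ ≥ 1 / 4 * (1 - 2 / ρ - 2 / ρ ^ 2 + 3 / ρ ^ 3) := by
  have hy : ρ⁻¹ ≤ 1 / 2 := by rw [one_div]; exact inv_anti₀ (by norm_num) hρ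
  have hy0 : 0 < ρ⁻¹ := by positivity
  have hθ := theta_le_inv (show 0 < ρ by linarith)
  have hθ0 := theta_pos ρ
  simp only [div_eq_mul_inv _ ρ, div_eq_mul_inv _ (ρ ^ _), ← inv_pow]
  have hκ : 1 - 2 * ρ⁻¹ ^ 2 - ρ⁻¹ ^ 3 ≤ kappa ρ := by
    unfold kappa
    gcongr
  calc 1 / 4 * (1 - 2 * ρ⁻¹ - 2 * ρ⁻¹ ^ 2 + 3 * ρ⁻¹ ^ 3)
      ≤ 1 / 4 * (1 - 2 * ρ⁻¹) * (1 - 2 * ρ⁻¹ ^ 2 - ρ⁻¹ ^ 3) := by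
        nlinarith [pow_pos hy0 4]
    _ ≤ 1 / 4 * (1 - 2 * ρ⁻¹) * kappa ρ :=
        mul_le_mul_of_nonneg_left hκ (by linarith)

/-! ### Elementary inequalities -/

lemma add_kappa_mul_inv_le {ρ a t f : ℝ} (hρ : 3 ≤ ρ) (ha : ρ ≤ a)
    (hf : ρ * f ≤ 1 + t - |t - theta ρ|) :
    f + kappa ρ * ρ⁻¹ ≤ (1 - kappa ρ) * (a + t) := by
  have hρ0 : 0 < ρ := by linarith
  have hκ : 1 - kappa ρ ≤ 2 * ρ⁻¹ := by
    linarith [one_sub_kappa_le_theta hρ, theta_le_inv hρ0, theta_pos ρ]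
  have hκ0 := kappa_le_one ρ
  have hf' : f ≤ ρ⁻¹ * (1 + t - |t - theta ρ|) := by
    rwa [← div_eq_inv_mul, le_div_iff₀' hρ0]
  have key := inv_mul_one_add_theta_add_kappa hρ0
  rcases le_total t (theta ρ) with ht | ht
  · rw [abs_of_nonpos (by linarith)] at hf'
    nlinarith [mul_le_mul_of_nonneg_right hκ (sub_nonneg.2 ht)]
  · rw [abs_of_nonneg (by linarith)] at hf'
    nlinarith [mul_nonneg (sub_nonneg.2 hκ0) (sub_nonneg.2 ht)]

lemma abs_sub_theta_le {ρ a t t' : ℝ} (ht : 0 ≤ t) (hrec : t * (a + t') = 1) :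
    |t - theta ρ| ≤ t * theta ρ * (|a - ρ| + |t' - theta ρ|) := by
  have hθ := theta_mul_add_theta ρ
  have hdiff : t - theta ρ = -(t * theta ρ * ((a - ρ) + (t' - theta ρ))) := by
    linear_combination -t * hθ + theta ρ * hrec
  have hpos : 0 ≤ t * theta ρ := mul_nonneg ht (theta_pos ρ).le
  rw [hdiff, abs_neg, abs_mul, abs_of_nonneg hpos]
  gcongr
  exact abs_add_le _ _

lemma mul_add_one_sub_abs_le {ρ a l t t' : ℝ} (hρ : 3 ≤ ρ) (hl : l = 0 ∨ l = 1)
    (hal : ρ - 1 ≤ a - l) (ht : 0 ≤ t) (hrec : t * (a + t') = 1) :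
    t * (ρ * l + 1 + t' - |t' - theta ρ|) ≤ 1 + t - |t - theta ρ| := by
  have hθ0 := theta_pos ρ
  have hθ3 := theta_le_one_third hρ
  have habs : theta ρ * |a - ρ| ≤ a - ρ * l := by
    rcases hl with rfl | rfl
    · have : |a - ρ| ≤ a + 1 := abs_le.2 ⟨by linarith, by linarith⟩
      nlinarith
    · rw [abs_of_nonneg (by linarith)]
      nlinarith
  have hcontr : theta ρ * |t' - theta ρ| ≤ |t' - theta ρ| :=
    mul_le_of_le_one_left (abs_nonneg _) (by linarith)
  have := mul_le_mul_of_nonneg_left (add_le_add habs hcontr) ht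
  linarith [abs_sub_theta_le (ρ := ρ) ht hrec]

lemma le_three_halves_mul_inv {ρ a x z : ℝ} (hρ : 3 ≤ ρ) (ha : ρ - 1 ≤ a) (hx : 0 ≤ x)
    (hz : 0 ≤ z) (hrec : x * (a + z) = 1) : x ≤ 3 / 2 * ρ⁻¹ := by
  rw [← div_eq_mul_inv, le_div_iff₀ (by linarith)]
  nlinarith [mul_nonneg hx hz]

-- If `g k < 0`, each step at least doubles `|g|`, which the lower bound `-C` forbids.
lemma nonneg_of_mul_succ_le {t g : ℕ → ℝ} {C : ℝ} {K : ℕ} (ht0 : ∀ k, 0 ≤ t k)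
    (ht : ∀ k, t k ≤ 1 / 2) (hC : 0 ≤ C) (hgC : ∀ k, K ≤ k → -C ≤ g k)
    (hg : ∀ k, K ≤ k → t k * g (k + 1) ≤ g k) {k : ℕ} (hk : K ≤ k) : 0 ≤ g k := by
  have bound : ∀ n k, K ≤ k → -(C * (1 / 2) ^ n) ≤ g k := by
    intro n
    induction n with
    | zero => simpa using hgC
    | succ n ih =>
      intro k hk
      have hpow : 0 ≤ C * (1 / 2) ^ n := by positivity
      calc -(C * (1 / 2) ^ (n + 1)) = 1 / 2 * -(C * (1 / 2) ^ n) := by ring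
        _ ≤ t k * -(C * (1 / 2) ^ n) :=
            mul_le_mul_of_nonpos_right (ht k) (neg_nonpos.2 hpow)
        _ ≤ t k * g (k + 1) := mul_le_mul_of_nonneg_left (ih _ (by omega)) (ht0 k)
        _ ≤ g k := hg k hk
  have hlim : Tendsto (fun n : ℕ => -(C * (1 / 2 : ℝ) ^ n)) atTop (nhds 0) := by
    simpa using ((tendsto_pow_atTop_nhds_zero_of_lt_one (by norm_num : (0 : ℝ) ≤ 1 / 2)
      (by norm_num)).const_mul C).neg
  exact le_of_tendsto' hlim fun n => bound n k hk

-- For a fixed sum `x + z` the product is concave in `x`, so an endpoint minimises it.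
lemma le_mul_of_le_mul_endpoints {x z X Y M T : ℝ} (hx : 0 ≤ x) (hz : 0 ≤ z) (hX : 0 ≤ X)
    (hY : 0 ≤ Y) (hM : M ≤ x + z) (hleft : T ≤ X * (M + Y)) (hright : T ≤ (M + X) * Y) :
    T ≤ (x + X) * (z + Y) := by
  rcases le_total X Y with h | h
  · nlinarith [mul_nonneg hx hz, mul_nonneg (sub_nonneg.2 h) hx,
      mul_le_mul_of_nonneg_left hM hX]
  · nlinarith [mul_nonneg hx hz, mul_nonneg (sub_nonneg.2 h) hz,
      mul_le_mul_of_nonneg_right hM hY]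

section Extremal

-- Here `y = 1 / ρ`, `s = ᾱ_k` and `t = α_{k+1}`, while `A` is the partial quotient `a_{k+1}` or
-- its even part plus one; `X` and `Y` are the two factors when `x_k` and `x_{k+2}` are `±1`.
variable {y κ A s t X Y : ℝ}

lemma le_mul_add_of_half_le (hy : y ≤ 1 / 2) (hκ : 0 ≤ κ) (hA : 3 ≤ A)
    (hAy : 1 ≤ A * y) (hs : 0 ≤ s) (ht : 0 ≤ t) (hX : 1 + s / 2 ≤ X)
    (hY : κ * (1 + t * y) ≤ Y) (hκt : κ * (1 + t * y) ≤ 1) :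
    (1 - 2 * y) * κ * (A + s + t) ≤ X * (A - 3 + Y) := by
  have hcoef : 0 ≤ (1 - 2 * y) * κ := mul_nonneg (by linarith) hκ
  have hA2 : (1 - 2 * y) * (A + t) ≤ (A - 2) * (1 + t * y) := by
    nlinarith [mul_nonneg (sub_nonneg.2 hAy) ht]
  have hrest : (1 - 2 * y) * κ * (A + t) ≤ A - 3 + Y :=
    calc (1 - 2 * y) * κ * (A + t) = κ * ((1 - 2 * y) * (A + t)) := by ring
      _ ≤ κ * ((A - 2) * (1 + t * y)) := mul_le_mul_of_nonneg_left hA2 hκ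
      _ ≤ A - 3 + κ * (1 + t * y) := by nlinarith
      _ ≤ A - 3 + Y := by linarith
  calc (1 - 2 * y) * κ * (A + s + t) ≤ (1 - 2 * y) * κ * ((1 + s / 2) * (A + t)) :=
        mul_le_mul_of_nonneg_left (by nlinarith) hcoef
    _ = (1 + s / 2) * ((1 - 2 * y) * κ * (A + t)) := by ring
    _ ≤ X * (A - 3 + Y) := mul_le_mul hX hrest
        (mul_nonneg hcoef (by linarith)) (by linarith)

lemma le_add_mul_of_one_sub_two_mul_le (hy0 : 0 ≤ y) (hy : y ≤ 1 / 2) (hκ : 0 ≤ κ)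
    (hA : 0 ≤ A) (hAy : 1 ≤ A * y) (hs : 0 ≤ s) (ht : 0 ≤ t) (hX : 1 + (1 - 2 * y) * s ≤ X)
    (hY : κ * (1 + t * y) ≤ Y) :
    (1 - 2 * y) * κ * (A + s + t) ≤ (A - 3 + X) * Y := by
  have hcoef : 0 ≤ (1 - 2 * y) * κ := mul_nonneg (by linarith) hκ
  have hty : 0 ≤ t * y := mul_nonneg ht hy0
  have hexpand : A + s + t ≤ (A + s) * (1 + t * y) := by
    nlinarith [mul_nonneg (sub_nonneg.2 hAy) ht, mul_nonneg hs hty]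
  have hfirst : (1 - 2 * y) * (A + s) ≤ A - 3 + X := by nlinarith
  calc (1 - 2 * y) * κ * (A + s + t) ≤ (1 - 2 * y) * κ * ((A + s) * (1 + t * y)) :=
        mul_le_mul_of_nonneg_left hexpand hcoef
    _ = (1 - 2 * y) * (A + s) * (κ * (1 + t * y)) := by ring
    _ ≤ (A - 3 + X) * Y := mul_le_mul hfirst hY (by positivity)
        ((mul_nonneg (by linarith) (by linarith)).trans hfirst)

lemma le_mul_add_of_one_sub_le (hy0 : 0 ≤ y) (hy : y ≤ 1 / 3) (hA : 2 ≤ A)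
    (hAy : 1 - y ≤ A * y) (hsy : s ≤ 3 / 2 * y) (ht : 0 ≤ t) (hX : 1 - s / 4 ≤ X)
    (hY : 1 + t ≤ Y) :
    (1 - 2 * y) * (A + s + t) ≤ X * (A - 2 + Y) := by
  calc (1 - 2 * y) * (A + s + t) ≤ (1 - s / 4) * (A - 2 + (1 + t)) := by nlinarith
    _ ≤ X * (A - 2 + Y) := mul_le_mul hX (by linarith) (by linarith) (by linarith)

lemma le_add_mul_of_one_sub_le (hy : y ≤ 1 / 3) (hA : 2 ≤ A)
    (hAy : 1 - y ≤ A * y) (hs : s ≤ 1 / 2) (ht : 0 ≤ t) (hX : 1 - s / 4 ≤ X)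
    (hY : 1 + t ≤ Y) :
    (1 - 2 * y) * (A + s + t) ≤ (A - 2 + X) * Y := by
  have hAy' : 0 ≤ (1 / 3 - y) * (A - 2) := mul_nonneg (by linarith) (by linarith)
  have hAs : 0 ≤ A - 2 - s / 4 + 2 * y := by linarith
  calc (1 - 2 * y) * (A + s + t) ≤ (A - 2 + (1 - s / 4)) * (1 + t) := by
        nlinarith [mul_nonneg ht hAs]
    _ ≤ (A - 2 + X) * Y := mul_le_mul (by linarith) hY (by linarith) (by linarith)

lemma le_mul_of_sub_one_le_add (hy0 : 0 ≤ y) (hy : y ≤ 1 / 2) (hκ : 0 ≤ κ) (hA : 3 ≤ A)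
    (hAy : 1 ≤ A * y) (hs : 0 ≤ s) (ht : 0 ≤ t) (hX : 1 + s / 2 ≤ X)
    (hX' : 1 + (1 - 2 * y) * s ≤ X) (hY : κ * (1 + t * y) ≤ Y) (hκt : κ * (1 + t * y) ≤ 1)
    {u r : ℝ} (hu : 1 ≤ u) (hr : 1 ≤ r) (hur : A - 1 ≤ u + r) :
    (1 - 2 * y) * κ * (A + s + t) ≤ (u - 1 + X) * (r - 1 + Y) :=
  le_mul_of_le_mul_endpoints (M := A - 3) (by linarith) (by linarith) (by linarith)
    ((mul_nonneg hκ (by positivity)).trans hY) (by linarith)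
    (le_mul_add_of_half_le hy hκ hA hAy hs ht hX hY hκt)
    (le_add_mul_of_one_sub_two_mul_le hy0 hy hκ (by linarith) hAy hs ht hX' hY)

lemma le_mul_of_le_add (hy0 : 0 ≤ y) (hy : y ≤ 1 / 3) (hA : 2 ≤ A) (hAy : 1 - y ≤ A * y)
    (hs : s ≤ 1 / 2) (hsy : s ≤ 3 / 2 * y) (ht : 0 ≤ t) (hX : 1 - s / 4 ≤ X) (hY : 1 + t ≤ Y)
    {u r : ℝ} (hu : 1 ≤ u) (hr : 1 ≤ r) (hur : A ≤ u + r) :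
    (1 - 2 * y) * (A + s + t) ≤ (u - 1 + X) * (r - 1 + Y) :=
  le_mul_of_le_mul_endpoints (M := A - 2) (by linarith) (by linarith) (by linarith)
    (by linarith) (by linarith)
    (le_mul_add_of_one_sub_le hy0 hy hA hAy hsy ht hX hY)
    (le_add_mul_of_one_sub_le hy hA hAy hs ht hX hY)

end Extremal

/-! ### Regular nearest integer continued fractions -/

/-- A number whose nearest integer continued fraction has all signs `ε_i = +1`, and hence
coincides with its regular continued fraction. -/
structure IsRegularNICF (α : ℝ) : Prop where
  irrational : Irrational α
  pos : 0 < α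
  lt_half : α < 1 / 2
  nicfE_eq_one : ∀ i, nicfE α i = 1

lemma nicfD_zero (α : ℝ) : nicfD α 0 = 1 := by simp [nicfD]

lemma nicfD_succ (α : ℝ) (k : ℕ) : nicfD α (k + 1) = nicfD α k * nicfT α k := by
  simp [nicfD, prod_range_succ]

lemma lamStar2_eq_zero_or_one (α : ℝ) (i : ℕ) :
    (lamStar2 α i : ℝ) = 0 ∨ (lamStar2 α i : ℝ) = 1 := by
  unfold lamStar2
  split_ifs <;> simp

lemma lamStar2_nonneg (α : ℝ) (i : ℕ) : 0 ≤ (lamStar2 α i : ℝ) := by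
  rcases lamStar2_eq_zero_or_one α i with h | h <;> norm_num [h]

lemma lamStar2_le_one (α : ℝ) (i : ℕ) : (lamStar2 α i : ℝ) ≤ 1 := by
  rcases lamStar2_eq_zero_or_one α i with h | h <;> norm_num [h]

lemma even_nicfA_sub_lamStar2 (α : ℝ) (i : ℕ) : Even (nicfA α i - lamStar2 α i) := by
  unfold lamStar2
  split_ifs with hodd
  · exact hodd.sub_odd odd_one
  · simpa using hodd

lemma abar_zero (α : ℝ) : abar α 0 = 0 := rfl

lemma abar_succ (α : ℝ) (k : ℕ) : abar α (k + 1) = qseq α k / qseq α (k + 1) := by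
  simp [abar]

lemma dminus2_zero (α : ℝ) : dminus2 α 0 = 0 := by simp [dminus2]

/-- `ρ - 1` bounds the even part `a_i - λ'_i` of every partial quotient beyond `a_K`. For an
odd integer `ρ` this says that an odd `a_i` is at least `ρ` and an even one at least `ρ - 1`. -/
def IsEvenPartThreshold (α ρ : ℝ) (K : ℕ) : Prop :=
  ∀ i, K < i → ρ - 1 ≤ nicfA α i - lamStar2 α i

lemma IsEvenPartThreshold.sub_one_le_nicfA {α ρ : ℝ} {K k : ℕ}
    (hK : IsEvenPartThreshold α ρ K) (hk : K ≤ k) :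
    ρ - 1 ≤ nicfA α (k + 1) := by
  linarith [hK (k + 1) (by omega), lamStar2_nonneg α (k + 1)]

/-- The integers `x_k` that put the form `u α + v`, shifted by `d_0^+`, in terms of the `k`-th
remainder: `u α + v - d_0^+ = D_{k-1} (x_k α_k + x_{k+1} - d_k^+)`. -/
noncomputable def formCoeff (α : ℝ) (u v : ℤ) : ℕ → ℤ
  | 0 => u
  | 1 => v
  | k + 2 =>
    formCoeff α u v k + nicfA α (k + 1) * formCoeff α u v (k + 1) - lamStar2 α (k + 1)

lemma even_nicfA_mul_sub_lamStar2 (α : ℝ) (i : ℕ) {x : ℤ} (hx : Odd x) :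
    Even (nicfA α i * x - lamStar2 α i) := by
  rw [show nicfA α i * x - lamStar2 α i = nicfA α i - lamStar2 α i + nicfA α i * (x - 1) by ring]
  exact (even_nicfA_sub_lamStar2 α i).add ((hx.sub_odd odd_one).mul_left _)

lemma odd_formCoeff (α : ℝ) {u v : ℤ} (hu : Odd u) (hv : Odd v) :
    ∀ k, Odd (formCoeff α u v k)
  | 0 => hu
  | 1 => hv
  | k + 2 => by
    rw [formCoeff, add_sub_assoc]
    exact (odd_formCoeff α hu hv k).add_even
      (even_nicfA_mul_sub_lamStar2 α (k + 1) (odd_formCoeff α hu hv (k + 1)))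

lemma exists_formCoeff_eq (α : ℝ) {x y : ℤ} (hx : Odd x) (hy : Odd y) (k : ℕ) :
    ∃ u v : ℤ, Odd u ∧ Odd v ∧ formCoeff α u v k = x ∧ formCoeff α u v (k + 1) = y := by
  induction k generalizing x y with
  | zero => exact ⟨x, y, hx, hy, rfl, rfl⟩
  | succ k ih =>
    obtain ⟨u, v, hu, hv, hk, hk'⟩ :=
      ih (hy.sub_even (even_nicfA_mul_sub_lamStar2 α (k + 1) hx)) hx
    refine ⟨u, v, hu, hv, hk', ?_⟩
    rw [formCoeff, hk, hk']
    ring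

namespace IsRegularNICF

variable {α : ℝ}

lemma fract_inv_nicfT_le_half (h : IsRegularNICF α) (i : ℕ) :
    Int.fract (nicfT α i)⁻¹ ≤ 1 / 2 := by
  by_contra hfract
  have := h.nicfE_eq_one (i + 2)
  rw [nicfE, if_neg hfract] at this
  norm_num at this

lemma nicfT_succ (h : IsRegularNICF α) (k : ℕ) : nicfT α (k + 1) = Int.fract (nicfT α k)⁻¹ := by
  rw [nicfT, if_pos (h.fract_inv_nicfT_le_half k)]

lemma nicfA_succ (h : IsRegularNICF α) (k : ℕ) : nicfA α (k + 1) = ⌊(nicfT α k)⁻¹⌋ := by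
  rw [nicfA, if_pos (h.fract_inv_nicfT_le_half k)]

lemma irrational_nicfT (h : IsRegularNICF α) (k : ℕ) : Irrational (nicfT α k) := by
  induction k with
  | zero => exact h.irrational
  | succ k ih =>
    rw [h.nicfT_succ, ← Int.self_sub_floor]
    exact ih.inv.sub_intCast _

lemma nicfT_pos (h : IsRegularNICF α) (k : ℕ) : 0 < nicfT α k := by
  cases k with
  | zero => exact h.pos
  | succ k =>
    refine lt_of_le_of_ne ?_ (h.irrational_nicfT _).ne_zero.symm
    rw [h.nicfT_succ]
    exact Int.fract_nonneg _

lemma nicfT_le_half (h : IsRegularNICF α) (k : ℕ) : nicfT α k ≤ 1 / 2 := by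
  cases k with
  | zero => exact h.lt_half.le
  | succ k => exact (h.nicfT_succ k).trans_le (h.fract_inv_nicfT_le_half k)

lemma two_le_nicfA_succ (h : IsRegularNICF α) (k : ℕ) : 2 ≤ nicfA α (k + 1) := by
  rw [h.nicfA_succ, Int.le_floor, Int.cast_ofNat, le_inv_comm₀ two_pos (h.nicfT_pos k)]
  simpa using h.nicfT_le_half k

lemma nicfT_mul_nicfA_add (h : IsRegularNICF α) (k : ℕ) :
    nicfT α k * (nicfA α (k + 1) + nicfT α (k + 1)) = 1 := by
  rw [h.nicfA_succ, h.nicfT_succ, Int.floor_add_fract, mul_inv_cancel₀ (h.nicfT_pos k).ne']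

lemma two_le_nicfA_sub_lamStar2 (h : IsRegularNICF α) (k : ℕ) :
    (2 : ℝ) ≤ nicfA α (k + 1) - lamStar2 α (k + 1) := by
  have hA := h.two_le_nicfA_succ k
  obtain ⟨m, hm⟩ := even_nicfA_sub_lamStar2 α (k + 1)
  have hl : lamStar2 α (k + 1) ≤ 1 := by exact_mod_cast lamStar2_le_one α (k + 1)
  have : 2 ≤ nicfA α (k + 1) - lamStar2 α (k + 1) := by omega
  exact_mod_cast this

lemma two_le_nicfA_cast (h : IsRegularNICF α) (k : ℕ) : (2 : ℝ) ≤ nicfA α (k + 1) := by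
  exact_mod_cast h.two_le_nicfA_succ k

lemma nicfD_pos (h : IsRegularNICF α) (k : ℕ) : 0 < nicfD α k :=
  prod_pos fun j _ => h.nicfT_pos j

lemma nicfD_add_le (h : IsRegularNICF α) (k n : ℕ) :
    nicfD α (k + n) ≤ nicfD α k * (1 / 2) ^ n := by
  rw [nicfD, prod_range_add]
  refine mul_le_mul_of_nonneg_left ?_ (h.nicfD_pos k).le
  calc ∏ j ∈ range n, nicfT α (k + j) ≤ ∏ _j ∈ range n, (1 / 2 : ℝ) :=
        prod_le_prod (fun j _ => (h.nicfT_pos _).le) fun j _ => h.nicfT_le_half _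
    _ = (1 / 2) ^ n := by simp

lemma qseq_add_two (h : IsRegularNICF α) (k : ℕ) :
    qseq α (k + 2) = nicfA α (k + 2) * qseq α (k + 1) + qseq α k := by
  rw [qseq, h.nicfE_eq_one, one_mul]

lemma qseq_pos_and_succ_ge (h : IsRegularNICF α) (k : ℕ) :
    0 < qseq α k ∧ 2 * qseq α k ≤ qseq α (k + 1) := by
  induction k with
  | zero => exact ⟨one_pos, h.two_le_nicfA_succ 0⟩
  | succ k ih =>
    have hpos : 0 < qseq α (k + 1) := by omega
    refine ⟨hpos, ?_⟩
    rw [h.qseq_add_two]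
    nlinarith [h.two_le_nicfA_succ (k + 1)]

lemma qseq_pos (h : IsRegularNICF α) (k : ℕ) : (0 : ℝ) < qseq α k := by
  exact_mod_cast (h.qseq_pos_and_succ_ge k).1

lemma natCast_le_qseq (h : IsRegularNICF α) (k : ℕ) : (k : ℝ) ≤ qseq α k := by
  suffices (k : ℤ) ≤ qseq α k by exact_mod_cast this
  induction k with
  | zero => simp [qseq]
  | succ k ih =>
    have := h.qseq_pos_and_succ_ge k
    push_cast
    omega

lemma qseq_succ_eq_mul (h : IsRegularNICF α) (k : ℕ) :
    (qseq α (k + 1) : ℝ) = qseq α k * (nicfA α (k + 1) + abar α k) := by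
  cases k with
  | zero => simp [qseq, abar_zero]
  | succ k =>
    have := (h.qseq_pos (k + 1)).ne'
    rw [h.qseq_add_two, abar_succ]
    push_cast
    field_simp

lemma abar_succ_mul (h : IsRegularNICF α) (k : ℕ) :
    abar α (k + 1) * (nicfA α (k + 1) + abar α k) = 1 := by
  have hk1 := (h.qseq_pos (k + 1)).ne'
  rw [abar_succ, div_mul_eq_mul_div, ← h.qseq_succ_eq_mul, div_self hk1]

lemma abar_nonneg (h : IsRegularNICF α) (k : ℕ) : 0 ≤ abar α k := by
  cases k with
  | zero => rfl
  | succ k =>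
    rw [abar_succ]
    exact div_nonneg (h.qseq_pos _).le (h.qseq_pos _).le

lemma abar_le_half (h : IsRegularNICF α) (k : ℕ) : abar α k ≤ 1 / 2 := by
  cases k with
  | zero => norm_num [abar_zero]
  | succ k => nlinarith [h.abar_succ_mul k, h.two_le_nicfA_cast k, h.abar_nonneg k,
      h.abar_nonneg (k + 1)]

lemma qseq_mul_nicfD_mul (h : IsRegularNICF α) (k : ℕ) :
    qseq α k * nicfD α k * (1 + abar α k * nicfT α k) = 1 := by
  induction k with
  | zero => simp [qseq, nicfD_zero, abar_zero]
  | succ k ih =>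
    rw [h.qseq_succ_eq_mul, nicfD_succ]
    linear_combination ih + qseq α k * nicfD α k * nicfT α k * nicfT α (k + 1) *
      h.abar_succ_mul k + qseq α k * nicfD α k * h.nicfT_mul_nicfA_add k

lemma qseq_mul_nicfD_succ_mul (h : IsRegularNICF α) (k : ℕ) :
    qseq α k * nicfD α (k + 1) * (nicfA α (k + 1) + abar α k + nicfT α (k + 1)) = 1 := by
  rw [nicfD_succ]
  linear_combination h.qseq_mul_nicfD_mul k +
    qseq α k * nicfD α k * h.nicfT_mul_nicfA_add k

lemma qseq_mul_nicfD_le_one (h : IsRegularNICF α) (k : ℕ) : qseq α k * nicfD α k ≤ 1 := by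
  nlinarith [h.qseq_mul_nicfD_mul k, mul_nonneg (h.abar_nonneg k) (h.nicfT_pos k).le]

lemma deltaSeq_eq (h : IsRegularNICF α) (k : ℕ) : deltaSeq α k = (-1) ^ k := by
  simp [deltaSeq, h.nicfE_eq_one, pow_succ]

lemma dminus2_succ (h : IsRegularNICF α) (k : ℕ) :
    dminus2 α (k + 1) = abar α (k + 1) * (lamStar2 α (k + 1) - dminus2 α k) := by
  rw [dminus2, sum_Icc_succ_top (by omega), h.deltaSeq_eq, abar_succ, Nat.add_sub_cancel]
  cases k with
  | zero =>
    simp only [Order.lt_one_iff, Icc_eq_empty_of_lt, sum_empty, zero_add, pow_zero,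
      Int.cast_one, mul_one, one_mul, dminus2_zero, sub_zero]
    ring
  | succ k =>
    have hk := (h.qseq_pos (k + 1)).ne'
    rw [dminus2, h.deltaSeq_eq, Nat.add_sub_cancel]
    push_cast
    field_simp
    ring

lemma dminus2_bounds (h : IsRegularNICF α) (k : ℕ) :
    -(abar α k / 2) ≤ dminus2 α k ∧ dminus2 α k ≤ 5 / 4 * abar α k ∧ dminus2 α k ≤ 1 / 2 := by
  induction k with
  | zero => norm_num [dminus2_zero, abar_zero]
  | succ k ih =>
    obtain ⟨hlow, -, hhalf⟩ := ih
    have hs := h.abar_nonneg (k + 1)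
    have hs2' := h.abar_le_half k
    have hrec := h.abar_succ_mul k
    have hal := h.two_le_nicfA_sub_lamStar2 k
    have hl0 := lamStar2_nonneg α (k + 1)
    have hl1 := lamStar2_le_one α (k + 1)
    rw [h.dminus2_succ]
    have hupper : lamStar2 α (k + 1) - dminus2 α k ≤ lamStar2 α (k + 1) + abar α k / 2 := by
      linarith
    refine ⟨?_, ?_, ?_⟩
    · nlinarith
    · nlinarith
    · nlinarith [mul_le_mul_of_nonneg_left hupper hs]

lemma summable_nicfD (h : IsRegularNICF α) : Summable (nicfD α) := by
  refine Summable.of_nonneg_of_le (fun k => (h.nicfD_pos k).le) (fun k => ?_)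
    summable_geometric_two
  simpa [nicfD_zero] using h.nicfD_add_le 0 k

lemma summable_lamStar2_mul_nicfD (h : IsRegularNICF α) :
    Summable fun k => (lamStar2 α k : ℝ) * nicfD α k :=
  h.summable_nicfD.of_nonneg_of_le
    (fun k => mul_nonneg (lamStar2_nonneg α k) (h.nicfD_pos k).le)
    fun k => mul_le_of_le_one_left (h.nicfD_pos k).le (lamStar2_le_one α k)

lemma dplus2_eq_mul (h : IsRegularNICF α) (k : ℕ) :
    dplus2 α k = nicfT α k * (lamStar2 α (k + 1) + dplus2 α (k + 1)) := by
  have hsum : Summable fun n => (lamStar2 α (k + 1 + n) : ℝ) * nicfD α (k + 1 + n) := by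
    simpa only [add_comm (k + 1)] using
      (summable_nat_add_iff (k + 1)).2 h.summable_lamStar2_mul_nicfD
  have hk := (h.nicfD_pos k).ne'
  have ht := (h.nicfT_pos k).ne'
  have hshift : ∑' n, (lamStar2 α (k + 1 + (n + 1)) : ℝ) * nicfD α (k + 1 + (n + 1)) =
      ∑' n, (lamStar2 α (k + 1 + 1 + n) : ℝ) * nicfD α (k + 1 + 1 + n) :=
    tsum_congr fun n => by rw [add_assoc (k + 1) 1 n, add_comm 1 n]
  rw [dplus2, dplus2, hsum.tsum_eq_zero_add, hshift, add_zero, nicfD_succ]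
  field_simp

lemma dplus2_nonneg (h : IsRegularNICF α) (k : ℕ) : 0 ≤ dplus2 α k :=
  div_nonneg (tsum_nonneg fun _ => mul_nonneg (lamStar2_nonneg α _) (h.nicfD_pos _).le)
    (h.nicfD_pos k).le

lemma dplus2_le_one (h : IsRegularNICF α) (k : ℕ) : dplus2 α k ≤ 1 := by
  rw [dplus2, div_le_one (h.nicfD_pos k), ← tsum_geometric_two' (nicfD α k)]
  have hle : ∀ n, (lamStar2 α (k + 1 + n) : ℝ) * nicfD α (k + 1 + n) ≤
      nicfD α k / 2 / 2 ^ n := fun n =>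
    calc (lamStar2 α (k + 1 + n) : ℝ) * nicfD α (k + 1 + n) ≤ nicfD α (k + (1 + n)) := by
          rw [← add_assoc]
          exact mul_le_of_le_one_left (h.nicfD_pos _).le (lamStar2_le_one α _)
      _ ≤ nicfD α k * (1 / 2) ^ (1 + n) := h.nicfD_add_le k _
      _ = nicfD α k / 2 / 2 ^ n := by
          rw [one_div_pow, pow_add]
          field_simp
  have hgeom := summable_geometric_two' (nicfD α k)
  exact (hgeom.of_nonneg_of_le (fun n => mul_nonneg (lamStar2_nonneg α _) (h.nicfD_pos _).le)
    hle).tsum_le_tsum hle hgeom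

lemma nicfA_mul_nicfD_succ (h : IsRegularNICF α) (k : ℕ) :
    nicfA α (k + 1) * nicfD α (k + 1) = nicfD α k - nicfD α (k + 2) := by
  rw [nicfD_succ α (k + 1), nicfD_succ α k]
  linear_combination nicfD α k * h.nicfT_mul_nicfA_add k

lemma two_mul_gammaStar2 (h : IsRegularNICF α) :
    2 * gammaStar2 α = 1 + α + dplus2 α 0 := by
  have hshift := (summable_nat_add_iff 2).2 h.summable_nicfD
  have hl := (summable_nat_add_iff 1).2 h.summable_lamStar2_mul_nicfD
  have hA : ∑' k, (nicfD α k - nicfD α (k + 2)) = 1 + α := by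
    rw [h.summable_nicfD.tsum_sub hshift, ← h.summable_nicfD.sum_add_tsum_nat_add 2,
      add_sub_cancel_right]
    simp [sum_range_succ, nicfD, nicfT]
  have hL : ∑' k, (lamStar2 α (k + 1) : ℝ) * nicfD α (k + 1) = dplus2 α 0 := by
    simp [dplus2, nicfD_zero, add_comm]
  rw [← hA, ← hL, ← (h.summable_nicfD.sub hshift).tsum_add hl, gammaStar2, ← tsum_mul_left]
  congr 1 with k
  rw [← h.nicfA_mul_nicfD_succ]
  ring

/-! ### Estimates beyond a threshold -/

section Threshold

variable {ρ : ℝ} {K k : ℕ}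

-- Equality holds when every `a_i` beyond `a_k` equals an odd integer `ρ`, so that `α_k = θ`.
lemma mul_dplus2_le (h : IsRegularNICF α) (hρ : 3 ≤ ρ)
    (hK : IsEvenPartThreshold α ρ K) (hk : K ≤ k) :
    ρ * dplus2 α k ≤ 1 + nicfT α k - |nicfT α k - theta ρ| := by
  refine sub_nonneg.1 (nonneg_of_mul_succ_le
    (g := fun k => 1 + nicfT α k - |nicfT α k - theta ρ| - ρ * dplus2 α k)
    (fun k => (h.nicfT_pos k).le) h.nicfT_le_half (C := ρ) (by linarith) (fun k _ => ?_)
    (fun k hk => ?_) hk)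
  · have habs : |nicfT α k - theta ρ| ≤ 1 + nicfT α k :=
      abs_le.2 ⟨by linarith [theta_le_one_third hρ, h.nicfT_pos k], by linarith [theta_pos ρ]⟩
    nlinarith [h.dplus2_le_one k]
  · have := mul_add_one_sub_abs_le hρ (lamStar2_eq_zero_or_one α (k + 1))
      (hK (k + 1) (by omega)) (h.nicfT_pos k).le (h.nicfT_mul_nicfA_add k)
    simp only [h.dplus2_eq_mul k]
    linarith

lemma kappa_mul_le_one_add_sub_dplus2 (h : IsRegularNICF α) (hρ : 3 ≤ ρ)
    (hK : IsEvenPartThreshold α ρ K) (hk : K ≤ k) :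
    kappa ρ * (1 + nicfT α k * ρ⁻¹) ≤ 1 + nicfT α k - dplus2 α k := by
  have hf' := h.mul_dplus2_le hρ hK (hk.trans k.le_succ)
  have ht := (h.nicfT_pos k).le
  have hal := hK (k + 1) (by omega)
  rw [h.dplus2_eq_mul]
  rcases lamStar2_eq_zero_or_one α (k + 1) with hl | hl
  · have hy := inv_le_one_third hρ
    have hfθ : dplus2 α (k + 1) ≤ ρ⁻¹ * (1 + theta ρ) := by
      rw [← div_eq_inv_mul, le_div_iff₀' (by linarith)]
      linarith [le_abs_self (nicfT α (k + 1) - theta ρ)]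
    have hκy : kappa ρ * ρ⁻¹ ≤ ρ⁻¹ :=
      mul_le_of_le_one_left (by positivity) (kappa_le_one ρ)
    have : kappa ρ * ρ⁻¹ + dplus2 α (k + 1) ≤ 1 := by
      nlinarith [theta_le_one_third hρ, theta_pos ρ]
    rw [hl]
    nlinarith [kappa_le_one ρ]
  · rw [hl] at hal ⊢
    have hcore := add_kappa_mul_inv_le hρ (sub_le_sub_iff_right 1 |>.1 hal) hf'
    linear_combination mul_le_mul_of_nonneg_left hcore ht + (1 - kappa ρ) * h.nicfT_mul_nicfA_add k

lemma nicfT_le_three_halves_mul_inv (h : IsRegularNICF α) (hρ : 3 ≤ ρ)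
    (hK : IsEvenPartThreshold α ρ K) (hk : K ≤ k) :
    nicfT α k ≤ 3 / 2 * ρ⁻¹ :=
  le_three_halves_mul_inv hρ (hK.sub_one_le_nicfA hk) (h.nicfT_pos _).le
    (h.nicfT_pos _).le (h.nicfT_mul_nicfA_add k)

lemma abar_succ_le_three_halves_mul_inv (h : IsRegularNICF α) (hρ : 3 ≤ ρ)
    (hK : IsEvenPartThreshold α ρ K) (hk : K ≤ k) :
    abar α (k + 1) ≤ 3 / 2 * ρ⁻¹ :=
  le_three_halves_mul_inv hρ (hK.sub_one_le_nicfA hk) (h.abar_nonneg _)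
    (h.abar_nonneg _) (h.abar_succ_mul k)

lemma kappa_mul_one_add_nicfT_mul_inv_le_one (h : IsRegularNICF α) (hρ : 3 ≤ ρ)
    (hK : IsEvenPartThreshold α ρ K) (hk : K ≤ k) :
    kappa ρ * (1 + nicfT α k * ρ⁻¹) ≤ 1 := by
  have hy : 0 ≤ ρ⁻¹ := inv_nonneg.2 (by linarith)
  have hty : nicfT α k * ρ⁻¹ ≤ 1 - kappa ρ :=
    calc nicfT α k * ρ⁻¹ ≤ 3 / 2 * ρ⁻¹ * ρ⁻¹ :=
          mul_le_mul_of_nonneg_right (h.nicfT_le_three_halves_mul_inv hρ hK hk) hy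
      _ = 3 / 2 * ρ⁻¹ ^ 2 := by ring
      _ ≤ 1 - kappa ρ := three_halves_mul_inv_sq_le_one_sub_kappa hρ
  nlinarith [mul_le_mul_of_nonneg_left hty (kappa_nonneg hρ), sq_nonneg (1 - kappa ρ)]

lemma dminus2_succ_le (h : IsRegularNICF α) (hρ : 3 ≤ ρ)
    (hK : IsEvenPartThreshold α ρ K) (hk : K ≤ k) :
    dminus2 α (k + 1) ≤ 2 * ρ⁻¹ := by
  have hy : 0 ≤ ρ⁻¹ := inv_nonneg.2 (by linarith)
  linarith [(h.dminus2_bounds (k + 1)).2.1, h.abar_succ_le_three_halves_mul_inv hρ hK hk]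

lemma neg_two_mul_inv_mul_abar_le_dminus2 (h : IsRegularNICF α) (hρ : 3 ≤ ρ)
    (hK : IsEvenPartThreshold α ρ K) (hk : K ≤ k) :
    -(2 * ρ⁻¹ * abar α (k + 2)) ≤ dminus2 α (k + 2) := by
  have he := h.dminus2_succ_le hρ hK hk
  have hl := lamStar2_nonneg α (k + 2)
  rw [h.dminus2_succ (k + 1)]
  nlinarith [h.abar_nonneg (k + 2)]

lemma mul_le_transition_of_pos (h : IsRegularNICF α) (hρ : 3 ≤ ρ)
    (hK : IsEvenPartThreshold α ρ K) (hk : K + 2 ≤ k) {u p r : ℝ}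
    (hu : 1 ≤ u) (hp : 1 ≤ p) (hr : 1 ≤ r)
    (hrec : u + r = nicfA α (k + 1) * p - lamStar2 α (k + 1)) :
    (1 - 2 * ρ⁻¹) * kappa ρ * (nicfA α (k + 1) + abar α k + nicfT α (k + 1)) ≤
      (u + p * abar α k + dminus2 α k) * (r + p * nicfT α (k + 1) - dplus2 α (k + 1)) := by
  have hy := inv_le_one_third hρ
  have hy0 : 0 < ρ⁻¹ := inv_pos.2 (by linarith)
  have hκ := kappa_nonneg hρ
  have hs := h.abar_nonneg k
  have ht := (h.nicfT_pos (k + 1)).le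
  have hal := hK (k + 1) (by omega)
  have hapos := h.two_le_nicfA_cast k
  have he := (h.dminus2_bounds k).1
  have he' : -(2 * ρ⁻¹ * abar α k) ≤ dminus2 α k := by
    obtain ⟨j, rfl⟩ := Nat.exists_eq_add_of_le' hk
    exact h.neg_two_mul_inv_mul_abar_le_dminus2 (k := j + K) hρ hK (by omega)
  have hY := h.kappa_mul_le_one_add_sub_dplus2 hρ hK (show K ≤ k + 1 by omega)
  have hκt := h.kappa_mul_one_add_nicfT_mul_inv_le_one hρ hK (show K ≤ k + 1 by omega)
  have hY0 := (mul_nonneg hκ (by positivity)).trans hY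
  set A : ℝ := nicfA α (k + 1) - lamStar2 α (k + 1) + 1
  have hAρ : ρ ≤ A := by linarith
  have hAy : 1 ≤ A * ρ⁻¹ := by rwa [← div_eq_mul_inv, one_le_div (by linarith)]
  have hAa : nicfA α (k + 1) ≤ A := by linarith [lamStar2_le_one α (k + 1)]
  calc (1 - 2 * ρ⁻¹) * kappa ρ * (nicfA α (k + 1) + abar α k + nicfT α (k + 1))
      ≤ (1 - 2 * ρ⁻¹) * kappa ρ * (A + abar α k + nicfT α (k + 1)) :=
        mul_le_mul_of_nonneg_left (by linarith) (mul_nonneg (by linarith) hκ)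
    _ ≤ (u - 1 + (1 + abar α k + dminus2 α k)) *
          (r - 1 + (1 + nicfT α (k + 1) - dplus2 α (k + 1))) :=
        le_mul_of_sub_one_le_add hy0.le (by linarith) hκ (by linarith) hAy hs ht
          (by linarith) (by linarith) hY hκt hu hr (by nlinarith)
    _ ≤ (u + p * abar α k + dminus2 α k) * (r + p * nicfT α (k + 1) - dplus2 α (k + 1)) :=
        mul_le_mul (by nlinarith) (by nlinarith) (by linarith) (by nlinarith)

lemma mul_le_transition_of_neg (h : IsRegularNICF α) (hρ : 3 ≤ ρ)
    (hK : IsEvenPartThreshold α ρ K) (hk : K + 1 ≤ k) {u p r : ℝ}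
    (hu : 1 ≤ u) (hp : 1 ≤ p) (hr : 1 ≤ r)
    (hrec : u + r = nicfA α (k + 1) * p + lamStar2 α (k + 1)) :
    (1 - 2 * ρ⁻¹) * kappa ρ * (nicfA α (k + 1) + abar α k + nicfT α (k + 1)) ≤
      (u + p * abar α k - dminus2 α k) * (r + p * nicfT α (k + 1) + dplus2 α (k + 1)) := by
  have hy := inv_le_one_third hρ
  have hy0 : 0 < ρ⁻¹ := inv_pos.2 (by linarith)
  have hs := h.abar_nonneg k
  have hs2 := h.abar_le_half k
  have ht := (h.nicfT_pos (k + 1)).le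
  have ha := hK.sub_one_le_nicfA (show K ≤ k by omega)
  have ha2 := h.two_le_nicfA_cast k
  have he := (h.dminus2_bounds k).2.1
  have hf := h.dplus2_nonneg (k + 1)
  have hl := lamStar2_nonneg α (k + 1)
  have hsy : abar α k ≤ 3 / 2 * ρ⁻¹ := by
    obtain ⟨j, rfl⟩ := Nat.exists_eq_add_of_le' hk
    exact h.abar_succ_le_three_halves_mul_inv (k := j + K) hρ hK (by omega)
  have hay : 1 - ρ⁻¹ ≤ nicfA α (k + 1) * ρ⁻¹ := by
    have := mul_le_mul_of_nonneg_right ha hy0.le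
    rwa [sub_mul, one_mul, mul_inv_cancel₀ (by linarith)] at this
  calc (1 - 2 * ρ⁻¹) * kappa ρ * (nicfA α (k + 1) + abar α k + nicfT α (k + 1))
      ≤ (1 - 2 * ρ⁻¹) * (nicfA α (k + 1) + abar α k + nicfT α (k + 1)) :=
        mul_le_mul_of_nonneg_right
          (mul_le_of_le_one_right (by linarith) (kappa_le_one ρ)) (by linarith)
    _ ≤ (u - 1 + (1 + abar α k - dminus2 α k)) *
          (r - 1 + (1 + nicfT α (k + 1) + dplus2 α (k + 1))) :=
        le_mul_of_le_add hy0.le hy ha2 hay hs2 hsy ht (by linarith) (by linarith) hu hr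
          (by nlinarith)
    _ ≤ (u + p * abar α k - dminus2 α k) * (r + p * nicfT α (k + 1) + dplus2 α (k + 1)) :=
        mul_le_mul (by nlinarith) (by nlinarith) (by linarith) (by nlinarith)

end Threshold

/-! ### The inhomogeneous form -/

lemma abs_eq_qseq_mul (h : IsRegularNICF α) (u v : ℤ) (k : ℕ) :
    |(u : ℝ)| = qseq α k *
      |formCoeff α u v k - formCoeff α u v (k + 1) * abar α k - dminus2 α k| := by
  suffices hk : (-1) ^ k * (u : ℝ) =
      qseq α k * (formCoeff α u v k - formCoeff α u v (k + 1) * abar α k - dminus2 α k) by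
    rw [← abs_of_pos (h.qseq_pos k), ← abs_mul, ← hk, abs_mul, abs_pow, abs_neg, abs_one,
      one_pow, one_mul]
  induction k with
  | zero => simp [formCoeff, qseq, abar_zero, dminus2_zero]
  | succ k ih =>
    rw [formCoeff, h.dminus2_succ, h.qseq_succ_eq_mul]
    push_cast
    linear_combination -ih + qseq α k * (formCoeff α u v k +
      nicfA α (k + 1) * formCoeff α u v (k + 1) - dminus2 α k) * h.abar_succ_mul k

lemma mul_add_sub_dplus2_eq_nicfD_mul (h : IsRegularNICF α) (u v : ℤ) (k : ℕ) :
    u * α + v - dplus2 α 0 = nicfD α k *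
      (formCoeff α u v k * nicfT α k + formCoeff α u v (k + 1) - dplus2 α k) := by
  induction k with
  | zero => simp [formCoeff, nicfD_zero, nicfT]
  | succ k ih =>
    rw [ih, h.dplus2_eq_mul k, formCoeff, nicfD_succ]
    push_cast
    linear_combination -nicfD α k * formCoeff α u v (k + 1) * h.nicfT_mul_nicfA_add k

lemma half_qseq_le_abs (h : IsRegularNICF α) {u v : ℤ} {k : ℕ}
    (hneg : formCoeff α u v k * formCoeff α u v (k + 1) < 0) :
    (qseq α k : ℝ) / 2 ≤ |(u : ℝ)| := by
  have hs := h.abar_nonneg k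
  have hs2 := h.abar_le_half k
  obtain ⟨hlow, -, hhalf⟩ := h.dminus2_bounds k
  rw [h.abs_eq_qseq_mul u v k, div_eq_mul_one_div]
  refine mul_le_mul_of_nonneg_left ?_ (h.qseq_pos k).le
  rcases mul_neg_iff.1 hneg with ⟨hx, hx'⟩ | ⟨hx, hx'⟩
  · refine le_trans ?_ (le_abs_self _)
    have hx : (1 : ℝ) ≤ formCoeff α u v k := by exact_mod_cast hx
    have hx' : (formCoeff α u v (k + 1) : ℝ) ≤ 0 := by exact_mod_cast hx'.le
    nlinarith
  · refine le_trans ?_ (neg_le_abs _)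
    have hx : (formCoeff α u v k : ℝ) ≤ -1 := by exact_mod_cast Int.le_sub_one_of_lt hx
    have hx' : (0 : ℝ) ≤ formCoeff α u v (k + 1) := by exact_mod_cast hx'.le
    nlinarith

lemma exists_sign_transition (h : IsRegularNICF α) {u v : ℤ} (hu : Odd u) (hv : Odd v) {J : ℕ}
    (hJ : formCoeff α u v J * formCoeff α u v (J + 1) < 0) :
    ∃ k ≥ J, formCoeff α u v k * formCoeff α u v (k + 1) < 0 ∧
      0 < formCoeff α u v (k + 1) * formCoeff α u v (k + 2) := by
  by_contra! hnot
  have hneg : ∀ k ≥ J, formCoeff α u v k * formCoeff α u v (k + 1) < 0 := fun k hk => by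
    induction k, hk using Nat.le_induction with
    | base => exact hJ
    | succ k hk ih =>
      have hodd := (odd_formCoeff α hu hv (k + 1)).mul (odd_formCoeff α hu hv (k + 2))
      exact lt_of_le_of_ne (hnot k hk ih) fun hzero => Int.not_odd_zero (hzero ▸ hodd)
  obtain ⟨n, hn⟩ := exists_nat_gt (2 * |(u : ℝ)|)
  have hbig := h.half_qseq_le_abs (hneg (n + J) (by omega))
  have hq := h.natCast_le_qseq (n + J)
  push_cast at hq
  linarith [J.cast_nonneg (α := ℝ)]

lemma abs_le_of_same_sign (h : IsRegularNICF α) (k : ℕ) : ∃ C : ℝ, ∀ u v : ℤ,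
    0 ≤ formCoeff α u v k * formCoeff α u v (k + 1) →
      |u * α + v - dplus2 α 0| ≤ 1 → |(u : ℝ)| ≤ C := by
  have ht := h.nicfT_pos k
  have hD := h.nicfD_pos k
  refine ⟨qseq α k * (((nicfD α k)⁻¹ + 1) / nicfT α k + 1), fun u v hsign hF => ?_⟩
  rw [h.abs_eq_qseq_mul u v k]
  rw [h.mul_add_sub_dplus2_eq_nicfD_mul u v k, abs_mul, abs_of_pos hD] at hF
  have hsign' : (0 : ℝ) ≤ formCoeff α u v k * formCoeff α u v (k + 1) := by
    exact_mod_cast hsign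
  generalize (formCoeff α u v k : ℝ) = x, (formCoeff α u v (k + 1) : ℝ) = x' at *
  have hsum : |x * nicfT α k + x'| = |x| * nicfT α k + |x'| := by
    rw [(abs_add_eq_add_abs_iff _ _).2, abs_mul, abs_of_pos ht]
    exact (mul_nonneg_iff.1 hsign').imp (.imp_left (mul_nonneg · ht.le))
      (.imp_left (mul_nonpos_of_nonpos_of_nonneg · ht.le))
  have hform : |x| * nicfT α k + |x'| ≤ (nicfD α k)⁻¹ + 1 := by
    have hclose : |x * nicfT α k + x' - dplus2 α k| ≤ (nicfD α k)⁻¹ := by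
      rwa [← one_div, le_div_iff₀' hD]
    have := abs_sub_abs_le_abs_sub (x * nicfT α k + x') (dplus2 α k)
    rw [abs_of_nonneg (h.dplus2_nonneg k), hsum] at this
    linarith [h.dplus2_le_one k]
  have hcoeff : |x| + |x'| ≤ ((nicfD α k)⁻¹ + 1) / nicfT α k := by
    rw [le_div_iff₀ ht]
    nlinarith [h.nicfT_le_half k, abs_nonneg x']
  refine mul_le_mul_of_nonneg_left ?_ (h.qseq_pos k).le
  have hs := h.abar_nonneg k
  have hs2 := h.abar_le_half k
  obtain ⟨hlow, -, hhalf⟩ := h.dminus2_bounds k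
  have he : |dminus2 α k| ≤ 1 := abs_le.2 ⟨by linarith, by linarith⟩
  have hx's : |x' * abar α k| ≤ |x'| := by
    rw [abs_mul, abs_of_nonneg hs]
    exact mul_le_of_le_one_right (abs_nonneg _) (by linarith)
  calc |x - x' * abar α k - dminus2 α k| ≤ |x - x' * abar α k| + |dminus2 α k| := abs_sub _ _
    _ ≤ |x| + |x' * abar α k| + |dminus2 α k| := by gcongr; exact abs_sub _ _
    _ ≤ ((nicfD α k)⁻¹ + 1) / nicfT α k + 1 := by linarith

lemma le_abs_mul_abs_of_transition (h : IsRegularNICF α) {ρ : ℝ} {K k : ℕ} (hρ : 3 ≤ ρ)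
    (hK : IsEvenPartThreshold α ρ K) (hk : K + 2 ≤ k) {u v : ℤ}
    (hneg : formCoeff α u v k * formCoeff α u v (k + 1) < 0)
    (hpos : 0 < formCoeff α u v (k + 1) * formCoeff α u v (k + 2)) :
    (1 - 2 * ρ⁻¹) * kappa ρ ≤ |(u : ℝ)| * |u * α + v - dplus2 α 0| := by
  have hq := h.qseq_pos k
  have hD := h.nicfD_pos (k + 1)
  suffices hprod : (1 - 2 * ρ⁻¹) * kappa ρ *
      (nicfA α (k + 1) + abar α k + nicfT α (k + 1)) ≤
      |formCoeff α u v k - formCoeff α u v (k + 1) * abar α k - dminus2 α k| *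
      |formCoeff α u v (k + 1) * nicfT α (k + 1) + formCoeff α u v (k + 2) -
        dplus2 α (k + 1)| by
    rw [h.abs_eq_qseq_mul u v k, h.mul_add_sub_dplus2_eq_nicfD_mul u v (k + 1), abs_mul,
      abs_of_pos hD]
    have := mul_le_mul_of_nonneg_left hprod (mul_pos hq hD).le
    linear_combination this - (1 - 2 * ρ⁻¹) * kappa ρ * h.qseq_mul_nicfD_succ_mul k
  have hrec : (formCoeff α u v (k + 2) : ℝ) = formCoeff α u v k +
      nicfA α (k + 1) * formCoeff α u v (k + 1) - lamStar2 α (k + 1) := by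
    rw [formCoeff]
    push_cast
    ring
  have ht := (h.nicfT_pos (k + 1)).le
  have hf := h.dplus2_nonneg (k + 1)
  have hf' := h.dplus2_le_one (k + 1)
  rcases mul_neg_iff.1 hneg with ⟨hx, hx'⟩ | ⟨hx, hx'⟩
  · have hx'' := neg_of_mul_pos_right hpos hx'.le
    have hu : (1 : ℝ) ≤ formCoeff α u v k := by exact_mod_cast hx
    have hp : (1 : ℝ) ≤ -formCoeff α u v (k + 1) := by exact_mod_cast neg_pos.2 hx'
    have hr : (1 : ℝ) ≤ -formCoeff α u v (k + 2) := by exact_mod_cast neg_pos.2 hx''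
    refine (h.mul_le_transition_of_neg hρ hK (by omega) hu hp hr
      (by linear_combination -hrec)).trans ?_
    refine mul_le_mul ((le_of_eq ?_).trans (le_abs_self _)) ((le_of_eq ?_).trans (neg_le_abs _))
      (by nlinarith) (abs_nonneg _) <;> ring
  · have hx'' := pos_of_mul_pos_right hpos hx'.le
    have hu : (1 : ℝ) ≤ -formCoeff α u v k := by exact_mod_cast neg_pos.2 hx
    have hp : (1 : ℝ) ≤ formCoeff α u v (k + 1) := by exact_mod_cast hx'
    have hr : (1 : ℝ) ≤ formCoeff α u v (k + 2) := by exact_mod_cast hx''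
    refine (h.mul_le_transition_of_pos hρ hK hk hu hp hr (by linear_combination hrec)).trans ?_
    refine mul_le_mul ((le_of_eq ?_).trans (neg_le_abs _)) ((le_of_eq ?_).trans (le_abs_self _))
      (by nlinarith) (abs_nonneg _) <;> ring

lemma exists_forall_le_abs_mul_abs (h : IsRegularNICF α) {ρ : ℝ} {K : ℕ} (hρ : 3 ≤ ρ)
    (hK : IsEvenPartThreshold α ρ K) : ∃ C : ℝ, ∀ u v : ℤ, Odd u → Odd v → C < |(u : ℝ)| →
      |u * α + v - dplus2 α 0| ≤ 1 →
        (1 - 2 * ρ⁻¹) * kappa ρ ≤ |(u : ℝ)| * |u * α + v - dplus2 α 0| := by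
  obtain ⟨C, hC⟩ := h.abs_le_of_same_sign (K + 2)
  refine ⟨C, fun u v hu hv hCu hF => ?_⟩
  have hopp : formCoeff α u v (K + 2) * formCoeff α u v (K + 2 + 1) < 0 := by
    by_contra! hsame
    exact hCu.not_ge (hC u v hsame hF)
  obtain ⟨k, hk, hneg, hpos⟩ := h.exists_sign_transition hu hv hopp
  exact h.le_abs_mul_abs_of_transition hρ hK hk hneg hpos

lemma exists_large_abs_mul_abs_le (h : IsRegularNICF α) (N : ℕ) : ∃ u v : ℤ, Odd u ∧ Odd v ∧
    (N : ℝ) ≤ |(u : ℝ)| ∧ |(u : ℝ)| * |u * α + v - dplus2 α 0| ≤ 4 := by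
  obtain ⟨u, v, hu, hv, hx, hx'⟩ := exists_formCoeff_eq α odd_one odd_neg_one (2 * N)
  have hD := h.nicfD_pos (2 * N)
  refine ⟨u, v, hu, hv, ?_, ?_⟩
  · have := h.half_qseq_le_abs (u := u) (v := v) (k := 2 * N) (by rw [hx, hx']; norm_num)
    have hq := h.natCast_le_qseq (2 * N)
    push_cast at hq
    linarith
  · rw [h.abs_eq_qseq_mul u v (2 * N), h.mul_add_sub_dplus2_eq_nicfD_mul u v (2 * N), hx, hx',
      abs_mul, abs_of_pos hD, mul_mul_mul_comm]
    push_cast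
    calc _ ≤ 1 * (2 * 2 : ℝ) :=
          mul_le_mul (h.qseq_mul_nicfD_le_one (2 * N)) (mul_le_mul ?_ ?_ (abs_nonneg _) two_pos.le)
            (by positivity) one_pos.le
      _ = 4 := by norm_num
    · have hs := h.abar_nonneg (2 * N)
      have hs2 := h.abar_le_half (2 * N)
      obtain ⟨hlow, -, hhalf⟩ := h.dminus2_bounds (2 * N)
      exact abs_le.2 ⟨by linarith, by linarith⟩
    · have ht2 := h.nicfT_le_half (2 * N)
      have hf := h.dplus2_nonneg (2 * N)
      have hf' := h.dplus2_le_one (2 * N)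
      exact abs_le.2 ⟨by linarith [h.nicfT_pos (2 * N)], by linarith⟩

end IsRegularNICF

/-! ### From the form to `M(α,γ)` -/

section Reduction

variable {α β γ : ℝ}

lemma nint_nonneg (x : ℝ) : 0 ≤ nint x := abs_nonneg _

lemma mul_add_sub_eq_two_mul (hγ : 2 * γ = 1 + α + β) (n m : ℤ) :
    ((2 * n - 1 : ℤ) : ℝ) * α + ((-(2 * m + 1) : ℤ) : ℝ) - β = 2 * (n * α - γ - m) := by
  push_cast
  linear_combination hγ

lemma le_abs_mul_nint_mul {n : ℤ} {B : ℝ} (hγ : 2 * γ = 1 + α + β)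
    (hB : ∀ v : ℤ, Odd v → |((2 * n - 1 : ℤ) : ℝ) * α + v - β| ≤ 1 →
      B ≤ |((2 * n - 1 : ℤ) : ℝ)| * |((2 * n - 1 : ℤ) : ℝ) * α + v - β|) :
    B ≤ (2 * |(n : ℝ)| + 1) * (2 * nint (n * α - γ)) := by
  have heq : |((2 * n - 1 : ℤ) : ℝ) * α + ((-(2 * round (n * α - γ) + 1) : ℤ) : ℝ) - β| =
      2 * nint (n * α - γ) := by
    rw [mul_add_sub_eq_two_mul hγ, abs_mul, abs_two, nint]
  have hhalf : nint (n * α - γ) ≤ 1 / 2 := abs_sub_round _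
  have hu : |((2 * n - 1 : ℤ) : ℝ)| ≤ 2 * |(n : ℝ)| + 1 := by
    push_cast
    simpa only [abs_mul, abs_two, abs_one] using abs_sub (2 * (n : ℝ)) 1
  have := hB (-(2 * round (n * α - γ) + 1)) (odd_two_mul_add_one _).neg (by linarith)
  rw [heq] at this
  exact this.trans (mul_le_mul_of_nonneg_right hu (mul_nonneg two_pos.le (nint_nonneg _)))

lemma frequently_abs_mul_nint_le {M : ℝ} (hγ : 2 * γ = 1 + α + β)
    (hM : ∀ N : ℕ, ∃ u v : ℤ, Odd u ∧ Odd v ∧ (N : ℝ) ≤ |(u : ℝ)| ∧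
      |(u : ℝ)| * |u * α + v - β| ≤ M) :
    ∃ᶠ n : ℤ in cofinite, |(n : ℝ)| * nint (n * α - γ) ≤ M := by
  refine frequently_cofinite_iff_infinite.2
    (.of_image Int.natAbs (Set.infinite_of_forall_exists_gt fun N => ?_))
  obtain ⟨u, v, ⟨j, rfl⟩, ⟨i, rfl⟩, hN, hsmall⟩ := hM (2 * N + 2)
  have hN' : 2 * N + 2 ≤ (2 * j + 1).natAbs := by
    rw [← Int.cast_abs, Int.abs_eq_natAbs] at hN
    exact_mod_cast hN
  refine ⟨(j + 1).natAbs, ⟨j + 1, ?_, rfl⟩, by omega⟩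
  have heq := mul_add_sub_eq_two_mul hγ (j + 1) (-(i + 1))
  rw [show 2 * (j + 1) - 1 = 2 * j + 1 by ring, show -(2 * -(i + 1) + 1) = 2 * i + 1 by ring]
    at heq
  have hnint : nint ((j + 1 : ℤ) * α - γ) ≤ |(j + 1 : ℤ) * α - γ - (-(i + 1) : ℤ)| :=
    round_le _ _
  have hj : |((j + 1 : ℤ) : ℝ)| ≤ |((2 * j + 1 : ℤ) : ℝ)| := by
    rw [← Int.cast_abs, ← Int.cast_abs, Int.abs_eq_natAbs, Int.abs_eq_natAbs]
    exact_mod_cast (by omega : (j + 1).natAbs ≤ (2 * j + 1).natAbs)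
  refine le_trans (mul_le_mul hj ?_ (nint_nonneg _) (abs_nonneg _)) hsmall
  rw [heq, abs_mul, abs_two]
  linarith [abs_nonneg ((j + 1 : ℤ) * α - γ - (-(i + 1) : ℤ))]

lemma tendsto_abs_intCast_cofinite : Tendsto (fun n : ℤ => |(n : ℝ)|) cofinite atTop :=
  tendsto_norm_cocompact_atTop.comp Int.tendsto_coe_cofinite

lemma div_four_le_Mval {B C M : ℝ} (hγ : 2 * γ = 1 + α + β)
    (hB : ∀ u v : ℤ, Odd u → Odd v → C < |(u : ℝ)| → |u * α + v - β| ≤ 1 →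
      B ≤ |(u : ℝ)| * |u * α + v - β|)
    (hM : ∀ N : ℕ, ∃ u v : ℤ, Odd u ∧ Odd v ∧ (N : ℝ) ≤ |(u : ℝ)| ∧
      |(u : ℝ)| * |u * α + v - β| ≤ M) :
    B / 4 ≤ Mval α γ := by
  have hinv := (tendsto_abs_intCast_cofinite.const_mul_atTop two_pos).inv_tendsto_atTop
  have hlim : Tendsto (fun n : ℤ => B / 4 / (1 + (2 * |(n : ℝ)|)⁻¹)) cofinite
      (nhds (B / 4 / (1 + 0))) :=
    tendsto_const_nhds.div (hinv.const_add 1) (by norm_num)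
  rw [add_zero, div_one] at hlim
  rw [← hlim.liminf_eq]
  refine liminf_le_liminf ?_ hlim.isBoundedUnder_ge
    (.of_frequently_le (frequently_abs_mul_nint_le hγ hM))
  filter_upwards [tendsto_abs_intCast_cofinite.eventually_gt_atTop (max C 1)] with n hn
  obtain ⟨hnC, hn1⟩ := max_lt_iff.1 hn
  have hu : C < |((2 * n - 1 : ℤ) : ℝ)| := by
    have := abs_sub_abs_le_abs_sub (2 * (n : ℝ)) 1
    rw [abs_mul, abs_two, abs_one] at this
    push_cast
    linarith
  have hbound := le_abs_mul_nint_mul hγ fun v hv =>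
    hB (2 * n - 1) v ((even_two_mul n).sub_odd odd_one) hv hu
  rw [div_le_iff₀ (by positivity)]
  calc B / 4 ≤ (2 * |(n : ℝ)| + 1) * (2 * nint (n * α - γ)) / 4 := by gcongr
    _ = |(n : ℝ)| * nint (n * α - γ) * (1 + (2 * |(n : ℝ)|)⁻¹) := by
      field_simp
      ring

end Reduction

/-- The paper's `R_*`: the least odd integer that is at least `R`, as a real number. -/
noncomputable def oddCeil (R : ℕ) : ℝ := if Odd R then R else R + 1

lemma three_le_oddCeil {R : ℕ} (hR : 2 ≤ R) : 3 ≤ oddCeil R := by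
  unfold oddCeil
  split_ifs with hodd
  · have : 3 ≤ R := by
      obtain ⟨m, rfl⟩ := hodd
      omega
    exact_mod_cast this
  · have : (2 : ℝ) ≤ R := by exact_mod_cast hR
    linarith

lemma oddCeil_sub_one_le_nicfA_sub_lamStar2 {α : ℝ} {R i : ℕ} (hR : (R : ℤ) ≤ nicfA α i) :
    oddCeil R - 1 ≤ nicfA α i - lamStar2 α i := by
  unfold oddCeil
  split_ifs with hodd
  · have : (R : ℝ) ≤ nicfA α i := by exact_mod_cast hR
    linarith [lamStar2_le_one α i]
  · obtain ⟨m, hm⟩ := Nat.not_odd_iff_even.1 hodd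
    obtain ⟨j, hj⟩ := even_nicfA_sub_lamStar2 α i
    have hl : lamStar2 α i ≤ 1 := by exact_mod_cast lamStar2_le_one α i
    have : (R : ℤ) ≤ nicfA α i - lamStar2 α i := by omega
    have : (R : ℝ) ≤ nicfA α i - lamStar2 α i := by exact_mod_cast this
    linarith

theorem stmt4_general (α : ℝ) (hirr : Irrational α) (h0 : 0 < α) (h12 : α < 1 / 2)
    (heps : ∀ i, nicfE α i = 1) (ρ θ : ℝ) (hρ : 3 ≤ ρ)
    (hbd : ∀ᶠ i in atTop, ρ - 1 ≤ nicfA α i - lamStar2 α i)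
    (hθ : θ = (√(ρ ^ 2 + 4) - ρ) / 2) :
    Mval α (gammaStar2 α) ≥ 1 / 4 * (1 - 2 / ρ) * (1 - 2 * θ ^ 2 - θ ^ 3) ∧
      1 / 4 * (1 - 2 / ρ) * (1 - 2 * θ ^ 2 - θ ^ 3) ≥
        1 / 4 * (1 - 2 / ρ - 2 / ρ ^ 2 + 3 / ρ ^ 3) := by
  obtain rfl : θ = theta ρ := hθ
  refine ⟨?_, one_sub_two_div_mul_kappa_ge (by linarith)⟩
  have h : IsRegularNICF α := ⟨hirr, h0, h12, heps⟩
  obtain ⟨K, hK⟩ := eventually_atTop.1 hbd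
  obtain ⟨C, hC⟩ := h.exists_forall_le_abs_mul_abs hρ fun i hi => hK i hi.le
  refine (div_four_le_Mval h.two_mul_gammaStar2 hC h.exists_large_abs_mul_abs_le).trans' ?_
  rw [kappa]
  exact le_of_eq (by ring)

/-- Theorem 5: lower bound for `M(α,γ_**)` when the NICF expansion of `α` is regular
(all `ε_i = +1`). -/
theorem stmt4 (α : ℝ) (hirr : Irrational α) (h0 : 0 < α) (h12 : α < 1 / 2)
    (heps : ∀ i, nicfE α i = 1)
    (R : ℕ) (hR2 : 2 ≤ R)
    (hbd : ∀ᶠ i in Filter.atTop, (R : ℤ) ≤ nicfA α i)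
    (hfreq : ∃ᶠ i in Filter.atTop, nicfA α i = (R : ℤ))
    (Rs θ1 : ℝ)
    (hRs : Rs = if Odd R then (R : ℝ) else (R : ℝ) + 1)
    (hθ1 : θ1 = (Real.sqrt (Rs ^ 2 + 4) - Rs) / 2) :
    Mval α (gammaStar2 α) ≥ 1 / 4 * (1 - 2 / Rs) * (1 - 2 * θ1 ^ 2 - θ1 ^ 3) ∧
      1 / 4 * (1 - 2 / Rs) * (1 - 2 * θ1 ^ 2 - θ1 ^ 3) ≥
        1 / 4 * (1 - 2 / Rs - 2 / Rs ^ 2 + 3 / Rs ^ 3) := by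
  obtain rfl : Rs = oddCeil R := hRs
  exact stmt4_general α hirr h0 h12 heps _ θ1 (three_le_oddCeil hR2)
    (hbd.mono fun _ => oddCeil_sub_one_le_nicfA_sub_lamStar2) hθ1
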